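/- arXiv:2506.21836 — 2 statements merged into one kernel-verified Lean document; each statement's English description precedes it below -/
import Mathlib

section
/- Characterization of the intersection initial segment rule: Let X be a finite set with |X| ≥ 3. An SRS R : ℛ(𝔛) → ℛ(X) satisfies NT, WIVIP, IWS, IBS, and INUI if and only if R = R^IIS. -/
/-!
Social ranking solutions (SRSs).  The set of individuals is a finite type `X`;
coalitions are elements of `Finset X` (so the domain of a power relation is the
whole power set `𝔛 = 2^X`).  A weak order `≿ ∈ ℛ(𝔛)` is encoded as a relation
`r : Finset X → Finset X → Prop` together with (when needed) its list of
equivalence classes `L = [Σ₁, …, Σ_l]` in strictly decreasing order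
(`IsClassList r L`).
-/

namespace SocialRanking

variable {X : Type*} [Fintype X] [DecidableEq X]

/-- A weak order: a reflexive, complete and transitive binary relation. -/
def IsWeakOrder {A : Type*} (r : A → A → Prop) : Prop :=
  Reflexive r ∧ (∀ a b, r a b ∨ r b a) ∧ Transitive r

/-- A social ranking solution maps every weak order on `2^X` to a weak order on `X`. -/
def IsSRS (R : (Finset X → Finset X → Prop) → X → X → Prop) : Prop :=
  ∀ r, IsWeakOrder r → IsWeakOrder (R r)

/-- `IsClassList r L` : `L = [Σ₁, …, Σ_l]` is the list of the equivalence classes of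
the weak order `r` on `2^X`, in strictly decreasing order (`≿ : Σ₁ ≻ ⋯ ≻ Σ_l`):
every class is nonempty, every coalition lies in exactly one class, and
`S ≿ T ↔ i ≤ j` whenever `S ∈ Σᵢ` and `T ∈ Σⱼ` (0-based indices). -/
def IsClassList (r : Finset X → Finset X → Prop) (L : List (Finset (Finset X))) : Prop :=
  (∀ C ∈ L, C.Nonempty) ∧
  (∀ S : Finset X, ∃! i : ℕ, i < L.length ∧ S ∈ L.getD i ∅) ∧
  (∀ i j : ℕ, i < L.length → j < L.length →
    ∀ S ∈ L.getD i ∅, ∀ T ∈ L.getD j ∅, (r S T ↔ i ≤ j))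

/-- The asymmetric (strict) part `P` of a relation. -/
def StrictPart {A : Type*} (p : A → A → Prop) (a b : A) : Prop := p a b ∧ ¬ p b a

/-- The symmetric part `I` (indifference) of a relation. -/
def IndiffPart {A : Type*} (p : A → A → Prop) (a b : A) : Prop := p a b ∧ p b a

/-- The restrictions of `p` and `q` to `{x, y}` coincide. -/
def AgreeOn (p q : X → X → Prop) (x y : X) : Prop :=
  ∀ a ∈ ({x, y} : Set X), ∀ b ∈ ({x, y} : Set X), (p a b ↔ q a b)

/-- `|Δ[x]|` : the number of coalitions in `Δ` containing `x`. -/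
def count (Δ : Finset (Finset X)) (x : X) : ℕ := (Δ.filter (fun S => x ∈ S)).card

/-! ### Independence axioms and further axioms -/

/-- WIVIP: for a dichotomous `≿ : Σ₁ ≻ Σ₂`, any `x ∈ ⋂Σ₁` is socially strictly above
any `y ∉ ⋂Σ₁`. -/
def WIVIP (R : (Finset X → Finset X → Prop) → X → X → Prop) : Prop :=
  ∀ (r : Finset X → Finset X → Prop) (C₁ C₂ : Finset (Finset X)),
    IsClassList r [C₁, C₂] →
    ∀ x y : X, (∀ S ∈ C₁, x ∈ S) → (∃ S ∈ C₁, y ∉ S) →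
    StrictPart (R r) x y

/-- IWS (independence from the worst set): if `≿ : Σ₁ ≻ ⋯ ≻ Σ_{l-1} ≻ Σ_l` (`l ≥ 2`)
and `≿'` is obtained from `≿` by partitioning the worst class `Σ_l` into ordered
classes `Γ₁ ≻' ⋯ ≻' Γ_{l'}`, then `x P_≿ y` implies `x P_≿' y`. -/
def IWS (R : (Finset X → Finset X → Prop) → X → X → Prop) : Prop :=
  ∀ (r r' : Finset X → Finset X → Prop) (L Γ : List (Finset (Finset X)))
    (W : Finset (Finset X)),
    L ≠ [] → IsClassList r (L ++ [W]) → IsClassList r' (L ++ Γ) →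
    ∀ x y : X, StrictPart (R r) x y → StrictPart (R r') x y

/-- IBS (independence from the best set): if `≿ : Σ₁ ≻ Σ₂ ≻ ⋯ ≻ Σ_l` (`l ≥ 2`)
and `≿'` is obtained from `≿` by partitioning the best class `Σ₁` into ordered
classes `Γ₁ ≻' ⋯ ≻' Γ_{l'}`, then `x P_≿ y` implies `x P_≿' y`. -/
def IBS (R : (Finset X → Finset X → Prop) → X → X → Prop) : Prop :=
  ∀ (r r' : Finset X → Finset X → Prop) (B : Finset (Finset X))
    (L Γ : List (Finset (Finset X))),
    L ≠ [] → IsClassList r (B :: L) → IsClassList r' (Γ ++ L) →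
    ∀ x y : X, StrictPart (R r) x y → StrictPart (R r') x y

/-- TO (tops-only): two weak orders with the same best equivalence class get the
same social ranking. -/
def TO (R : (Finset X → Finset X → Prop) → X → X → Prop) : Prop :=
  ∀ (r r' : Finset X → Finset X → Prop) (B : Finset (Finset X))
    (L L' : List (Finset (Finset X))),
    IsClassList r (B :: L) → IsClassList r' (B :: L') → R r = R r'

/-- The class list obtained from `L` by sliding `Δ` out of class `k₁` into class `k₂`
(`Σ_{k₁}` is replaced by `Σ_{k₁} \ Δ` and `Σ_{k₂}` by `Σ_{k₂} ∪ Δ`; if `Δ = Σ_{k₁}`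
the emptied class disappears). -/
def slide (L : List (Finset (Finset X))) (k₁ k₂ : ℕ) (Δ : Finset (Finset X)) :
    List (Finset (Finset X)) :=
  ((L.set k₁ ((L.getD k₁ ∅) \ Δ)).set k₂ ((L.getD k₂ ∅) ∪ Δ)).filter
    (fun C => decide (C ≠ ∅))

/-- SI (slide independence): sliding a proper subfamily `Δ ⊊ Σ_{k₁}` with
`|Δ[x]| = |Δ[y]|` into another class does not change the social ranking on `{x, y}`. -/
def SI (R : (Finset X → Finset X → Prop) → X → X → Prop) : Prop :=
  ∀ (r r' : Finset X → Finset X → Prop) (L : List (Finset (Finset X)))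
    (k₁ k₂ : ℕ) (x y : X) (Δ : Finset (Finset X)),
    IsClassList r L → k₁ < L.length → k₂ < L.length →
    Δ ⊂ L.getD k₁ ∅ → count Δ x = count Δ y →
    IsClassList r' (slide L k₁ k₂ Δ) →
    AgreeOn (R r) (R r') x y

/-- SSI (strong slide independence): as SI, but `Δ ⊆ Σ_{k₁}` may be the whole class
(in which case the class disappears). -/
def SSI (R : (Finset X → Finset X → Prop) → X → X → Prop) : Prop :=
  ∀ (r r' : Finset X → Finset X → Prop) (L : List (Finset (Finset X)))
    (k₁ k₂ : ℕ) (x y : X) (Δ : Finset (Finset X)),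
    IsClassList r L → k₁ < L.length → k₂ < L.length →
    Δ ⊆ L.getD k₁ ∅ → count Δ x = count Δ y →
    IsClassList r' (slide L k₁ k₂ Δ) →
    AgreeOn (R r) (R r') x y

/-- Top-SI: the condition of SI restricted to slides out of the best class (`k₁ = 1`,
i.e. index `0`). -/
def TopSI (R : (Finset X → Finset X → Prop) → X → X → Prop) : Prop :=
  ∀ (r r' : Finset X → Finset X → Prop) (L : List (Finset (Finset X)))
    (k₂ : ℕ) (x y : X) (Δ : Finset (Finset X)),
    IsClassList r L → 0 < L.length → k₂ < L.length →
    Δ ⊂ L.getD 0 ∅ → count Δ x = count Δ y →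
    IsClassList r' (slide L 0 k₂ Δ) →
    AgreeOn (R r) (R r') x y

/-- The class list of `≿' : Σ₁ ≻' ⋯ ≻' Σ_{k-1} ≻' Δ ≻' Σ_k \ Δ ≻' ⋯ ≻' Σ_l`
(empty classes disappear). -/
def inuiList (L : List (Finset (Finset X))) (k : ℕ) (Δ : Finset (Finset X)) :
    List (Finset (Finset X)) :=
  (L.take k ++ [Δ, (L.getD k ∅) \ Δ] ++ L.drop (k + 1)).filter
    (fun C => decide (C ≠ ∅))

/-- INUI (independence of non-unanimous improvements). -/
def INUI (R : (Finset X → Finset X → Prop) → X → X → Prop) : Prop :=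
  ∀ (r r' : Finset X → Finset X → Prop) (L : List (Finset (Finset X)))
    (k : ℕ) (Δ : Finset (Finset X)) (x y : X),
    IsClassList r L → k < L.length → Δ ⊆ L.getD k ∅ →
    (∃ S ∈ Δ, x ∉ S) → (∃ S ∈ Δ, y ∉ S) →
    IsClassList r' (inuiList L k Δ) →
    AgreeOn (R r) (R r') x y

/-- The weak order `≿_π := {(π(S), π(T)) : S ≿ T}` induced by a permutation `π` of `X`. -/
def permRel (π : Equiv.Perm X) (r : Finset X → Finset X → Prop) :
    Finset X → Finset X → Prop :=
  fun A B => r (A.image π.symm) (B.image π.symm)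

/-- NT (neutrality). -/
def NT (R : (Finset X → Finset X → Prop) → X → X → Prop) : Prop :=
  ∀ (π : Equiv.Perm X) (r : Finset X → Finset X → Prop), IsWeakOrder r →
    ∀ x y : X, (R (permRel π r) (π x) (π y) ↔ R r x y)

/-- IIC (independence of irrelevant coalitions). -/
def IIC (R : (Finset X → Finset X → Prop) → X → X → Prop) : Prop :=
  ∀ (r r' : Finset X → Finset X → Prop), IsWeakOrder r → IsWeakOrder r' →
    ∀ x y : X,
      (∀ S : Finset X, x ∉ S → y ∉ S →
        (r (insert x S) (insert y S) ↔ r' (insert x S) (insert y S))) →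
      (R r x y ↔ R r' x y)

/-! ### The social ranking solutions -/

/-- `θ_≿(x) = (|Σ₁[x]|, …, |Σ_l[x]|)`. -/
def theta (L : List (Finset (Finset X))) (x : X) : List ℕ := L.map (fun C => count C x)

/-- The lexicographic order `a ≥^L b` on vectors of naturals. -/
def GeLex (a b : List ℕ) : Prop :=
  a = b ∨ ∃ k < a.length, (∀ j < k, a.getD j 0 = b.getD j 0) ∧ b.getD k 0 < a.getD k 0

/-- The dual lexicographic order `a ≥^DL b` (read from the last coordinate;
fewer appearances in worse classes is better). -/
def GeDualLex (a b : List ℕ) : Prop :=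
  a = b ∨ ∃ k < a.length, (∀ j, k < j → a.getD j 0 = b.getD j 0) ∧ a.getD k 0 < b.getD k 0

/-- The lexicographic excellence solution `R^L` : `x R^L_≿ y ↔ θ_≿(x) ≥^L θ_≿(y)`. -/
def RL (r : Finset X → Finset X → Prop) (x y : X) : Prop :=
  ∀ L, IsClassList r L → GeLex (theta L x) (theta L y)

/-- The dual lexicographic excellence solution `R^DL`. -/
def RDL (r : Finset X → Finset X → Prop) (x y : X) : Prop :=
  ∀ L, IsClassList r L → GeDualLex (theta L x) (theta L y)

/-- Plurality `R^P` : `x R^P_≿ y ↔ |Σ₁[x]| ≥ |Σ₁[y]|`. -/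
def RP (r : Finset X → Finset X → Prop) (x y : X) : Prop :=
  ∀ L, IsClassList r L → count (L.getD 0 ∅) y ≤ count (L.getD 0 ∅) x

/-- `e_≿(x)` : the largest `k` such that `x` belongs to every coalition of each of the
first `k` equivalence classes (`0` if `x ∉ T₁`). -/
def eIIS (L : List (Finset (Finset X))) (x : X) : ℕ :=
  (L.takeWhile (fun C => decide (∀ S ∈ C, x ∈ S))).length

/-- The intersection initial segment rule `R^IIS` : `x R^IIS_≿ y ↔ e_≿(x) ≥ e_≿(y)`. -/
def RIIS (r : Finset X → Finset X → Prop) (x y : X) : Prop :=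
  ∀ L, IsClassList r L → eIIS L y ≤ eIIS L x

/-- The constant-`X` rule: everybody is ranked indifferent. -/
def RconstX : (Finset X → Finset X → Prop) → X → X → Prop := fun _ _ _ => True

/-- The split-plurality score `s^split_≿(z) = ∑_{S ∈ Σ₁ : z ∈ S} 1/|S|`. -/
def splitScore (C : Finset (Finset X)) (z : X) : ℚ :=
  ∑ S ∈ C.filter (fun S => z ∈ S), (1 : ℚ) / (S.card : ℚ)

/-- Split-plurality `R^splitP`. -/
def RsplitP (r : Finset X → Finset X → Prop) (x y : X) : Prop :=
  ∀ L, IsClassList r L → splitScore (L.getD 0 ∅) y ≤ splitScore (L.getD 0 ∅) x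

/-- Plurality with tie-breaking by a linear order `t = ▷` :
`x R^{P,▷}_≿ y ↔ (x P^P_≿ y ∨ (x I^P_≿ y ∧ x ▷ y))`. -/
def RPtie (t : X → X → Prop) (r : Finset X → Finset X → Prop) (x y : X) : Prop :=
  ∀ L, IsClassList r L →
    (count (L.getD 0 ∅) y < count (L.getD 0 ∅) x ∨
      (count (L.getD 0 ∅) x = count (L.getD 0 ∅) y ∧ t x y))


/-!
For a class list `L`, a prefix `P` of `L` consists of coalitions containing `x` exactly when
`P.length ≤ eIIS L x`. Hence `eIIS L y < eIIS L x` iff some initial segment of `≿` has a union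
`U` with `x ∈ ⋂ U` and `y ∉ ⋂ U`.

If so, WIVIP makes `x` strictly better than `y` at the dichotomous order `U ≻ Uᶜ`, and IWS and
IBS carry this over to `≿` by splitting first `Uᶜ` and then `U` into the classes of `≿`. If
`eIIS L y = eIIS L x`, every coalition above the critical class contains both `x` and `y`, and the
critical class is unanimous for neither; INUI then allows the critical class to be merged with all
worse ones, after which the order is invariant under the transposition of `x` and `y`, and NT gives
indifference.
-/

section OrderedPartition

variable {β : Type*}

/-- An ordered partition of `β`: the lists of families that occur as the equivalence classes, from
best to worst, of a weak order on `β`. -/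
structure IsOrderedPartition (L : List (Finset β)) : Prop where
  nonempty : ∀ C ∈ L, C.Nonempty
  pairwise_disjoint : L.Pairwise Disjoint
  exists_mem : ∀ b, ∃ C ∈ L, b ∈ C

variable [DecidableEq β]

/-- The union `Σ₁ ∪ ⋯ ∪ Σ_l` of a list of classes. -/
def classUnion (L : List (Finset β)) : Finset β := L.foldr (· ∪ ·) ∅

/-- The weak order whose classes, from best to worst, are listed in `L`: an element is ranked by
the index of the first class containing it. -/
def rankRel (L : List (Finset β)) (a b : β) : Prop :=
  L.findIdx (a ∈ ·) ≤ L.findIdx (b ∈ ·)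

@[simp] theorem mem_classUnion {L : List (Finset β)} {b : β} :
    b ∈ classUnion L ↔ ∃ C ∈ L, b ∈ C := by
  induction L with
  | nil => simp [classUnion]
  | cons C L ih => simpa [classUnion] using or_congr_right ih

@[simp] theorem classUnion_cons (C : Finset β) (L : List (Finset β)) :
    classUnion (C :: L) = C ∪ classUnion L := rfl

theorem classUnion_append (P M : List (Finset β)) :
    classUnion (P ++ M) = classUnion P ∪ classUnion M := by
  ext b
  simp [or_and_right, exists_or]

theorem classUnion_subset_classUnion {P L : List (Finset β)} (h : P <+: L) :
    classUnion P ⊆ classUnion L := fun _ hb => by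
  obtain ⟨C, hC, hbC⟩ := mem_classUnion.1 hb
  exact mem_classUnion.2 ⟨C, h.subset hC, hbC⟩

theorem disjoint_classUnion_right {A : Finset β} {L : List (Finset β)} :
    Disjoint A (classUnion L) ↔ ∀ C ∈ L, Disjoint A C := by
  simp only [Finset.disjoint_left, mem_classUnion]
  grind

namespace IsOrderedPartition

variable {P P' M N : List (Finset β)} {C : Finset β}

theorem mem_classUnion_self {L : List (Finset β)} (h : IsOrderedPartition L) (b : β) :
    b ∈ classUnion L := mem_classUnion.2 (h.exists_mem b)

theorem disjoint_classUnion (h : IsOrderedPartition (P ++ M)) :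
    Disjoint (classUnion P) (classUnion M) := by
  refine disjoint_classUnion_right.2 fun D hD => Disjoint.symm ?_
  refine disjoint_classUnion_right.2 fun E hE => Disjoint.symm ?_
  exact (List.pairwise_append.1 h.pairwise_disjoint).2.2 E hE D hD

theorem mem_classUnion_left_iff (h : IsOrderedPartition (P ++ M)) (b : β) :
    b ∈ classUnion P ↔ b ∉ classUnion M := by
  refine ⟨fun hb => Finset.disjoint_left.1 h.disjoint_classUnion hb, fun hb => ?_⟩
  obtain ⟨C, hC, hbC⟩ := h.exists_mem b
  rcases List.mem_append.1 hC with hC | hC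
  · exact mem_classUnion.2 ⟨C, hC, hbC⟩
  · exact absurd (mem_classUnion.2 ⟨C, hC, hbC⟩) hb

theorem classUnion_left_eq (h : IsOrderedPartition (P ++ M)) (h' : IsOrderedPartition (P' ++ M)) :
    classUnion P = classUnion P' := by
  ext b
  rw [h.mem_classUnion_left_iff, h'.mem_classUnion_left_iff]

theorem merge (h : IsOrderedPartition (P ++ M ++ N)) (hM : M ≠ []) :
    IsOrderedPartition (P ++ [classUnion M] ++ N) where
  nonempty := by
    obtain ⟨C, hC⟩ := List.exists_mem_of_ne_nil M hM
    obtain ⟨b, hb⟩ := h.nonempty C (by simp [hC])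
    have hne : (classUnion M).Nonempty := ⟨b, mem_classUnion.2 ⟨C, hC, hb⟩⟩
    have := h.nonempty
    grind
  pairwise_disjoint := by
    have := h.pairwise_disjoint
    simp only [List.pairwise_append, List.pairwise_singleton, List.mem_append,
      List.mem_singleton] at this ⊢
    grind [disjoint_classUnion_right]
  exists_mem b := by
    obtain ⟨C, hC, hb⟩ := h.exists_mem b
    have : C ∈ M → b ∈ classUnion M := fun hCM => mem_classUnion.2 ⟨C, hCM, hb⟩
    grind

theorem findIdx_mem_eq_length (h : IsOrderedPartition (P ++ C :: M)) {b : β} (hb : b ∈ C) :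
    (P ++ C :: M).findIdx (b ∈ ·) = P.length := by
  have hbP : b ∉ classUnion P :=
    Finset.disjoint_right.1 h.disjoint_classUnion (by simp [hb])
  have hP : P.findIdx (b ∈ ·) = P.length :=
    List.findIdx_eq_length_of_false fun D hD => by
      simpa using fun hbD => hbP (mem_classUnion.2 ⟨D, hD, hbD⟩)
  simp [List.findIdx_append, hP, List.findIdx_cons, hb]

theorem findIdx_lt_length {L : List (Finset β)} (h : IsOrderedPartition L) (b : β) :
    L.findIdx (b ∈ ·) < L.length :=
  List.findIdx_lt_length.2 (by simpa using h.exists_mem b)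

theorem mem_getD_iff {L : List (Finset β)} (h : IsOrderedPartition L) {i : ℕ}
    (hi : i < L.length) {b : β} : b ∈ L.getD i ∅ ↔ L.findIdx (b ∈ ·) = i := by
  rw [List.getD_eq_getElem _ _ hi]
  constructor
  · intro hb
    have hL : L = L.take i ++ L[i] :: L.drop (i + 1) := by simp
    rw [hL] at h
    have hidx := h.findIdx_mem_eq_length hb
    rwa [← hL, List.length_take_of_le hi.le] at hidx
  · rintro rfl
    simpa using List.findIdx_getElem (w := hi)

theorem rankRel_iff_mem_classUnion (h : IsOrderedPartition (P ++ C :: M)) {a b : β}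
    (hb : b ∈ C) : rankRel (P ++ C :: M) a b ↔ a ∈ classUnion (P ++ [C]) := by
  have hlt : (P ++ [C]).findIdx (a ∈ ·) < (P ++ [C]).length ↔ a ∈ classUnion (P ++ [C]) := by
    simp only [List.findIdx_lt_length, mem_classUnion, decide_eq_true_eq]
  rw [rankRel, h.findIdx_mem_eq_length hb, ← hlt, ← List.singleton_append, ← List.append_assoc,
    List.findIdx_append]
  split_ifs with ha <;> grind

end IsOrderedPartition

theorem rankRel_apply_apply {L : List (Finset β)} {f : β → β}
    (hf : ∀ C ∈ L, ∀ b, f b ∈ C ↔ b ∈ C) (a b : β) :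
    rankRel L (f a) (f b) ↔ rankRel L a b := by
  have hidx (c : β) : L.findIdx (f c ∈ ·) = L.findIdx (c ∈ ·) :=
    le_antisymm (List.findIdx_le_findIdx fun C hC => by simp [hf C hC])
      (List.findIdx_le_findIdx fun C hC => by simp [hf C hC])
  rw [rankRel, rankRel, hidx, hidx]

theorem IsOrderedPartition.apply_mem_iff_of_fixed {P : List (Finset β)} {U : Finset β}
    (h : IsOrderedPartition (P ++ [U])) {f : β → β} (hf : f.Injective)
    (hfix : ∀ b ∈ classUnion P, f b = b) : ∀ C ∈ P ++ [U], ∀ b, f b ∈ C ↔ b ∈ C := by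
  intro C hC b
  by_cases hb : f b = b
  · rw [hb]
  have hbP : b ∉ classUnion P := fun h => hb (hfix b h)
  have hfbP : f b ∉ classUnion P := fun h => hb (hf (hfix (f b) h))
  rcases List.mem_append.1 hC with hCP | hCU
  · exact iff_of_false (fun h => hfbP (mem_classUnion.2 ⟨C, hCP, h⟩))
      (fun h => hbP (mem_classUnion.2 ⟨C, hCP, h⟩))
  · obtain rfl := List.mem_singleton.1 hCU
    rw [h.mem_classUnion_left_iff] at hbP hfbP
    simp_all

end OrderedPartition

section WeakOrder

variable {β : Type*}

theorem IsWeakOrder.exists_nat_le_iff [Finite β] {r : β → β → Prop} (h : IsWeakOrder r) :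
    ∃ f : β → ℕ, ∀ a b, r a b ↔ f a ≤ f b := by
  obtain ⟨hrefl, htotal, htrans⟩ := h
  have hanti {a b : β} (hab : r a b) : {c | ¬ r a c} ⊆ {c | ¬ r b c} :=
    fun c hac hbc => hac (htrans hab hbc)
  refine ⟨fun a => {c | ¬ r a c}.ncard, fun a b =>
    ⟨fun hab => Set.ncard_le_ncard (hanti hab), fun hle => ?_⟩⟩
  by_contra hab
  have hba : r b a := (htotal a b).resolve_left hab
  have hss : {c | ¬ r b c} ⊂ {c | ¬ r a c} :=
    (hanti hba).ssubset_of_mem_notMem (a := b) hab (by simpa using hrefl b)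
  exact hle.not_gt (Set.ncard_lt_ncard hss)

variable [Fintype β] {κ : Type*} [LinearOrder κ]

/-- The nonempty fibres of `f`, by increasing value of `f`: the classes of the weak order
`f a ≤ f b`, from best to worst. -/
def fibreList (f : β → κ) : List (Finset β) :=
  ((Finset.univ.image f).sort (· ≤ ·)).map fun n => Finset.univ.filter (f · = n)

theorem isOrderedPartition_fibreList (f : β → κ) : IsOrderedPartition (fibreList f) where
  nonempty := by simp [fibreList, Finset.Nonempty]
  pairwise_disjoint := by
    refine List.pairwise_map.2 ((Finset.sortedLT_sort _).pairwise.imp fun hlt => ?_)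
    exact Finset.disjoint_filter.2 fun _ _ h h' => hlt.ne (h.symm.trans h')
  exists_mem b := by simp [fibreList]

theorem rankRel_fibreList [DecidableEq β] (f : β → κ) (a b : β) :
    rankRel (fibreList f) a b ↔ f a ≤ f b := by
  have hidx (c : β) : (fibreList f).findIdx (c ∈ ·) =
      ((Finset.univ.image f).sort (· ≤ ·)).idxOf (f c) := by
    simp [fibreList, List.findIdx_map, List.idxOf, Function.comp_def, eq_comm,
      beq_eq_decide]
  have hlt (c : β) : ((Finset.univ.image f).sort (· ≤ ·)).idxOf (f c) <
      ((Finset.univ.image f).sort (· ≤ ·)).length :=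
    List.idxOf_lt_length_of_mem (by simp)
  rw [rankRel, hidx, hidx, ← (Finset.sortedLT_sort (Finset.univ.image f)).getElem_le_getElem_iff
    (hi := hlt a) (hj := hlt b), List.getElem_idxOf, List.getElem_idxOf]

end WeakOrder

section ClassList

variable {α : Type*} {r : Finset α → Finset α → Prop} {L P M : List (Finset (Finset α))}
  {C : Finset (Finset α)} {S T : Finset α}

theorem IsClassList.isOrderedPartition (h : IsClassList r L) : IsOrderedPartition L where
  nonempty := h.1
  pairwise_disjoint := by
    refine List.pairwise_iff_getElem.2 fun i j hi hj hij => ?_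
    refine Finset.disjoint_left.2 fun S hSi hSj => ?_
    exact hij.ne ((h.2.1 S).unique ⟨hi, by rwa [List.getD_eq_getElem _ _ hi]⟩
      ⟨hj, by rwa [List.getD_eq_getElem _ _ hj]⟩)
  exists_mem S := by
    obtain ⟨i, ⟨hi, hS⟩, -⟩ := h.2.1 S
    rw [List.getD_eq_getElem _ _ hi] at hS
    exact ⟨_, List.getElem_mem hi, hS⟩

theorem IsClassList.eq_rankRel [DecidableEq α] (h : IsClassList r L) : r = rankRel L := by
  have hL := h.isOrderedPartition
  funext S T
  have hS := hL.findIdx_lt_length S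
  have hT := hL.findIdx_lt_length T
  exact propext (h.2.2 _ _ hS hT S ((hL.mem_getD_iff hS).2 rfl) T ((hL.mem_getD_iff hT).2 rfl))

theorem IsOrderedPartition.isClassList_rankRel [DecidableEq α] (h : IsOrderedPartition L) :
    IsClassList (rankRel L) L := by
  refine ⟨h.nonempty, fun S => ⟨_, ⟨h.findIdx_lt_length S, ?_⟩, ?_⟩, fun i j hi hj S hS T hT => ?_⟩
  · exact (h.mem_getD_iff (h.findIdx_lt_length S)).2 rfl
  · exact fun i ⟨hi, hS⟩ => ((h.mem_getD_iff hi).1 hS).symm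
  · rw [rankRel, (h.mem_getD_iff hi).1 hS, (h.mem_getD_iff hj).1 hT]

theorem IsClassList.isWeakOrder (h : IsClassList r L) : IsWeakOrder r := by
  classical
  obtain rfl := h.eq_rankRel
  exact ⟨fun _ => le_refl _, fun _ _ => le_total _ _, fun _ _ _ => le_trans⟩

theorem IsWeakOrder.exists_isClassList [Finite α] (h : IsWeakOrder r) :
    ∃ L, IsClassList r L := by
  classical
  have := Fintype.ofFinite α
  obtain ⟨f, hf⟩ := h.exists_nat_le_iff
  have hr : r = rankRel (fibreList f) := by
    funext S T
    rw [hf, rankRel_fibreList]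
  exact ⟨fibreList f, hr ▸ (isOrderedPartition_fibreList f).isClassList_rankRel⟩

variable [DecidableEq α]

theorem IsClassList.rel_iff_mem_classUnion (h : IsClassList r (P ++ C :: M)) (hT : T ∈ C) :
    r S T ↔ S ∈ classUnion (P ++ [C]) := by
  rw [h.eq_rankRel, h.isOrderedPartition.rankRel_iff_mem_classUnion hT]

theorem IsClassList.exists_mem_classUnion_notMem (h : IsClassList r L) (x : α) :
    ∃ S ∈ classUnion L, x ∉ S :=
  ⟨∅, h.isOrderedPartition.mem_classUnion_self ∅, Finset.notMem_empty x⟩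

theorem inuiList_append_cons {Δ : Finset (Finset α)} (hP : ∀ D ∈ P, D.Nonempty)
    (hΔ : Δ.Nonempty) :
    inuiList (P ++ C :: M) P.length Δ =
      P ++ Δ :: ((C \ Δ) :: M).filter (fun D => decide (D ≠ ∅)) := by
  have hfilter : P.filter (fun D => decide (D ≠ ∅)) = P :=
    List.filter_eq_self.2 fun D hD => decide_eq_true (hP D hD).ne_empty
  have hget : (P ++ C :: M).getD P.length ∅ = C := by simp
  rw [inuiList, hget, List.take_left, List.append_assoc, List.filter_append, hfilter]
  simp [List.filter_cons, hΔ.ne_empty]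

theorem IsClassList.permRel_eq_self (h : IsClassList r L) {π : Equiv.Perm α}
    (hπ : ∀ C ∈ L, ∀ S, S.image π.symm ∈ C ↔ S ∈ C) : permRel π r = r := by
  obtain rfl := h.eq_rankRel
  funext S T
  exact propext (rankRel_apply_apply hπ S T)

theorem IsWeakOrder.permRel (h : IsWeakOrder r) (π : Equiv.Perm α) :
    IsWeakOrder (permRel π r) :=
  ⟨fun _ => h.1 _, fun _ _ => h.2.1 _ _, fun _ _ _ hST hTU => h.2.2 hST hTU⟩

theorem permRel_image_image (π : Equiv.Perm α) (r : Finset α → Finset α → Prop)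
    (S T : Finset α) : permRel π r (S.image π) (T.image π) ↔ r S T := by
  simp [SocialRanking.permRel, Finset.image_image]

end ClassList

section InitialSegment

variable {α : Type*} [Fintype α] [DecidableEq α] {r : Finset α → Finset α → Prop}
  {L P M : List (Finset (Finset α))} {C : Finset (Finset α)} {x y : α}

theorem length_le_eIIS_iff (h : P <+: L) :
    P.length ≤ eIIS L x ↔ ∀ S ∈ classUnion P, x ∈ S := by
  constructor
  · intro hle S hS
    have hP := List.prefix_of_prefix_length_le h (List.takeWhile_prefix _) hle
    obtain ⟨D, hD, hSD⟩ := mem_classUnion.1 hS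
    have hxD := List.mem_takeWhile_imp (hP.subset hD)
    rw [decide_eq_true_eq] at hxD
    exact hxD S hSD
  · intro hx
    obtain ⟨M, rfl⟩ := h
    have hP : ∀ D ∈ P, decide (∀ S ∈ D, x ∈ S) = true := fun D hD =>
      decide_eq_true fun S hS => hx S (mem_classUnion.2 ⟨D, hD, hS⟩)
    simp [eIIS, List.takeWhile_append_of_pos hP]

theorem eIIS_lt_eIIS_iff_exists : eIIS L y < eIIS L x ↔
    ∃ P, P <+: L ∧ (∀ S ∈ classUnion P, x ∈ S) ∧ ∃ S ∈ classUnion P, y ∉ S := by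
  have key {P} (h : P <+: L) : (∃ S ∈ classUnion P, y ∉ S) ↔ eIIS L y < P.length := by
    rw [← not_le, length_le_eIIS_iff h]
    push Not
    rfl
  constructor
  · intro hlt
    have hpre : L.takeWhile (fun C => decide (∀ S ∈ C, x ∈ S)) <+: L := List.takeWhile_prefix _
    exact ⟨_, hpre, (length_le_eIIS_iff hpre).1 le_rfl, (key hpre).2 hlt⟩
  · rintro ⟨P, hpre, hx, hy⟩
    exact ((key hpre).1 hy).trans_le ((length_le_eIIS_iff hpre).2 hx)

theorem IsClassList.eIIS_lt_length (h : IsClassList r L) (x : α) : eIIS L x < L.length := by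
  rw [← not_le, length_le_eIIS_iff List.prefix_rfl]
  push Not
  exact h.exists_mem_classUnion_notMem x

theorem eIIS_append_cons (hC : ∃ S ∈ C, x ∉ S) : eIIS (P ++ C :: M) x = eIIS P x := by
  have hC' : ¬ ∀ S ∈ C, x ∈ S := by push Not; exact hC
  rw [eIIS, List.takeWhile_append, List.takeWhile_cons_of_neg (by simpa using hC')]
  split_ifs with hP
  · simpa [eIIS] using hP.symm
  · rfl

theorem eIIS_append_cons_eq_length_iff : eIIS (P ++ C :: M) x = P.length ↔
    (∀ S ∈ classUnion P, x ∈ S) ∧ ∃ S ∈ C, x ∉ S := by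
  have hP := length_le_eIIS_iff (x := x) (List.prefix_append P (C :: M))
  have hPC := length_le_eIIS_iff (P := P ++ [C]) (L := P ++ C :: M) (x := x) (by simp)
  simp only [List.length_append, List.length_singleton] at hPC
  grind [mem_classUnion]

theorem IsClassList.eIIS_lt_eIIS_iff (h : IsClassList r L) :
    eIIS L y < eIIS L x ↔ ∃ T, y ∉ T ∧ ∀ S, r S T → x ∈ S := by
  rw [eIIS_lt_eIIS_iff_exists]
  constructor
  · rintro ⟨P, ⟨M, rfl⟩, hx, T, hT, hyT⟩
    obtain ⟨C, hC, hTC⟩ := mem_classUnion.1 hT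
    obtain ⟨P₁, P₂, rfl⟩ := List.append_of_mem hC
    rw [List.append_assoc, List.cons_append] at h
    refine ⟨T, hyT, fun S hST => hx S ?_⟩
    exact classUnion_subset_classUnion (by simp) ((h.rel_iff_mem_classUnion hTC).1 hST)
  · rintro ⟨T, hyT, hx⟩
    obtain ⟨C, hC, hTC⟩ := h.isOrderedPartition.exists_mem T
    obtain ⟨P, M, rfl⟩ := List.append_of_mem hC
    exact ⟨P ++ [C], by simp, fun S hS => hx S ((h.rel_iff_mem_classUnion hTC).2 hS), T,
      mem_classUnion.2 ⟨C, by simp, hTC⟩, hyT⟩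

theorem IsClassList.RIIS_iff (h : IsClassList r L) : RIIS r x y ↔ eIIS L y ≤ eIIS L x := by
  refine ⟨fun hxy => hxy L h, fun hle L' h' => ?_⟩
  rw [← not_lt] at hle ⊢
  rwa [h'.eIIS_lt_eIIS_iff, ← h.eIIS_lt_eIIS_iff]

theorem IsClassList.strictPart_RIIS_iff (h : IsClassList r L) :
    StrictPart (RIIS r) x y ↔ eIIS L y < eIIS L x := by
  rw [StrictPart, h.RIIS_iff, h.RIIS_iff, not_le, and_iff_right_of_imp le_of_lt]

theorem IsWeakOrder.RIIS_iff (h : IsWeakOrder r) :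
    RIIS r x y ↔ ¬ ∃ T, x ∉ T ∧ ∀ S, r S T → y ∈ S := by
  obtain ⟨L, hL⟩ := h.exists_isClassList
  rw [hL.RIIS_iff, ← not_lt, hL.eIIS_lt_eIIS_iff]

end InitialSegment

section Axioms

variable {α : Type*} [Fintype α] [DecidableEq α]

theorem nt_RIIS : NT (X := α) RIIS := by
  intro π r hr x y
  have hsurj : Function.Surjective fun S : Finset α => S.image π :=
    fun T => ⟨T.image π.symm, by simp [Finset.image_image]⟩
  rw [hr.RIIS_iff, (hr.permRel π).RIIS_iff, hsurj.exists]
  refine not_congr (exists_congr fun T => and_congr (not_congr ?_) ?_)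
  · rw [π.injective.mem_finset_image]
  · rw [hsurj.forall]
    exact forall_congr' fun S => by rw [permRel_image_image, π.injective.mem_finset_image]

theorem wivip_RIIS : WIVIP (X := α) RIIS := by
  intro r C₁ C₂ h x y hx hy
  rw [h.strictPart_RIIS_iff, eIIS_lt_eIIS_iff_exists]
  exact ⟨[C₁], by simp, by simpa using hx, by simpa using hy⟩

theorem iws_RIIS : IWS (X := α) RIIS := by
  intro r r' L Γ W _ h h' x y hxy
  rw [h.strictPart_RIIS_iff, eIIS_lt_eIIS_iff_exists] at hxy
  rw [h'.strictPart_RIIS_iff, eIIS_lt_eIIS_iff_exists]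
  obtain ⟨P, hP, hx, hy⟩ := hxy
  rcases List.prefix_concat_iff.1 hP with rfl | hPL
  · obtain ⟨S, hS, hxS⟩ := h.exists_mem_classUnion_notMem x
    exact absurd (hx S hS) hxS
  · exact ⟨P, hPL.trans (List.prefix_append L Γ), hx, hy⟩

theorem ibs_RIIS : IBS (X := α) RIIS := by
  intro r r' B L Γ _ h h' x y hxy
  rw [h.strictPart_RIIS_iff, eIIS_lt_eIIS_iff_exists] at hxy
  rw [h'.strictPart_RIIS_iff, eIIS_lt_eIIS_iff_exists]
  obtain ⟨P, hP, hx, hy⟩ := hxy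
  rcases List.prefix_cons_iff.1 hP with rfl | ⟨P, rfl, hPL⟩
  · simp at hy
  · have hΓ : classUnion Γ = classUnion [B] :=
      h'.isOrderedPartition.classUnion_left_eq (P' := [B]) h.isOrderedPartition
    have hunion : classUnion (Γ ++ P) = classUnion (B :: P) := by
      rw [classUnion_append, hΓ, ← classUnion_append, List.singleton_append]
    exact ⟨Γ ++ P, (List.prefix_append_right_inj Γ).2 hPL, hunion ▸ hx, hunion ▸ hy⟩

theorem inui_RIIS : INUI (X := α) RIIS := by
  intro r r' L k Δ x y h hk hΔ hx hy h'
  obtain ⟨P, C, M, rfl, rfl⟩ : ∃ P C M, L = P ++ C :: M ∧ k = P.length :=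
    ⟨L.take k, L[k], L.drop (k + 1), by simp, by simp [hk.le]⟩
  have hΔC : Δ ⊆ C := by simpa using hΔ
  have heq {z : α} (hz : ∃ S ∈ Δ, z ∉ S) :
      eIIS (P ++ C :: M) z = eIIS (inuiList (P ++ C :: M) P.length Δ) z := by
    obtain ⟨S, hS, hzS⟩ := hz
    rw [inuiList_append_cons (fun D hD => h.1 D (by simp [hD])) ⟨S, hS⟩,
      eIIS_append_cons ⟨S, hΔC hS, hzS⟩, eIIS_append_cons ⟨S, hS, hzS⟩]
  have hmiss : ∀ z ∈ ({x, y} : Set α), ∃ S ∈ Δ, z ∉ S := by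
    rintro z (rfl | rfl) <;> assumption
  intro a ha b hb
  rw [h.RIIS_iff, h'.RIIS_iff, heq (hmiss a ha), heq (hmiss b hb)]

end Axioms

section Congr

variable {α : Type*} {R R' : (Finset α → Finset α → Prop) → α → α → Prop}

theorem WIVIP.congr (hR : WIVIP R) (h : ∀ r, IsWeakOrder r → R' r = R r) : WIVIP R' := by
  intro r C₁ C₂ hr
  rw [h r hr.isWeakOrder]
  exact hR r C₁ C₂ hr

theorem IWS.congr (hR : IWS R) (h : ∀ r, IsWeakOrder r → R' r = R r) : IWS R' := by
  intro r r' L Γ W hL hr hr'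
  rw [h r hr.isWeakOrder, h r' hr'.isWeakOrder]
  exact hR r r' L Γ W hL hr hr'

theorem IBS.congr (hR : IBS R) (h : ∀ r, IsWeakOrder r → R' r = R r) : IBS R' := by
  intro r r' B L Γ hL hr hr'
  rw [h r hr.isWeakOrder, h r' hr'.isWeakOrder]
  exact hR r r' B L Γ hL hr hr'

theorem NT.congr [DecidableEq α] (hR : NT R) (h : ∀ r, IsWeakOrder r → R' r = R r) : NT R' := by
  intro π r hr
  rw [h r hr, h _ (hr.permRel π)]
  exact hR π r hr

theorem INUI.congr [DecidableEq α] (hR : INUI R) (h : ∀ r, IsWeakOrder r → R' r = R r) :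
    INUI R' := by
  intro r r' L k Δ x y hr hk hΔ hx hy hr'
  rw [h r hr.isWeakOrder, h r' hr'.isWeakOrder]
  exact hR r r' L k Δ x y hr hk hΔ hx hy hr'

end Congr

section Uniqueness

variable {α : Type*} [DecidableEq α]
  {R : (Finset α → Finset α → Prop) → α → α → Prop}
  {r s : Finset α → Finset α → Prop} {L P M : List (Finset (Finset α))}
  {C D U : Finset (Finset α)} {x y : α}

theorem strictPart_of_eIIS_lt [Fintype α] (hWIVIP : WIVIP R) (hIWS : IWS R) (hIBS : IBS R)
    (h : IsClassList r L) (hlt : eIIS L y < eIIS L x) : StrictPart (R r) x y := by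
  obtain ⟨P, ⟨M, rfl⟩, hx, hy⟩ := eIIS_lt_eIIS_iff_exists.1 hlt
  have hP : P ≠ [] := by rintro rfl; simp at hy
  have hM : M ≠ [] := by
    rintro rfl
    obtain ⟨S, hS, hxS⟩ := h.exists_mem_classUnion_notMem x
    exact hxS (hx S (by simpa using hS))
  have hcoarseTop : IsOrderedPartition (classUnion P :: M) :=
    IsOrderedPartition.merge (P := []) h.isOrderedPartition hP
  have hdichotomous : IsOrderedPartition [classUnion P, classUnion M] :=
    IsOrderedPartition.merge (P := [classUnion P]) (N := []) (by simpa using hcoarseTop) hM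
  have hstrict := hWIVIP _ _ _ hdichotomous.isClassList_rankRel x y hx hy
  have hstrictTop := hIWS _ _ [classUnion P] M (classUnion M) (by simp)
    hdichotomous.isClassList_rankRel hcoarseTop.isClassList_rankRel x y hstrict
  exact hIBS _ r (classUnion P) M P hM hcoarseTop.isClassList_rankRel h x y hstrictTop

theorem INUI.agreeOn_merge_two (hINUI : INUI R) (hr : IsClassList r (P ++ C :: D :: M))
    (hs : IsClassList s (P ++ (C ∪ D) :: M)) (hx : ∃ S ∈ C, x ∉ S) (hy : ∃ S ∈ C, y ∉ S) :
    AgreeOn (R s) (R r) x y := by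
  have hCD : (C ∪ D) \ C = D := by
    have hdisj : Disjoint C D := by
      have := hr.isOrderedPartition.pairwise_disjoint
      simp_all [List.pairwise_append]
    exact Finset.union_sdiff_cancel_left hdisj
  have hnonempty := hr.isOrderedPartition.nonempty
  have hlist : inuiList (P ++ (C ∪ D) :: M) P.length C = P ++ C :: D :: M := by
    rw [inuiList_append_cons (fun E hE => hnonempty E (by simp [hE])) (hnonempty C (by simp)), hCD,
      List.filter_eq_self.2]
    exact fun E hE => decide_eq_true (hnonempty E (by simp_all)).ne_empty
  exact hINUI s r _ P.length C x y hs (by simp) (by simp) hx hy (hlist ▸ hr)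

theorem INUI.agreeOn_merge_tail (hINUI : INUI R) (hr : IsClassList r (P ++ C :: M))
    (hs : IsClassList s (P ++ [classUnion (C :: M)]))
    (hx : ∃ S ∈ C, x ∉ S) (hy : ∃ S ∈ C, y ∉ S) : AgreeOn (R s) (R r) x y := by
  induction M generalizing C r with
  | nil =>
    have hrs : r = s := by
      rw [hr.eq_rankRel, hs.eq_rankRel]
      simp [classUnion]
    subst hrs
    exact fun _ _ _ _ => Iff.rfl
  | cons D M ih =>
    have hmerged : IsOrderedPartition (P ++ (C ∪ D) :: M) := by
      simpa [classUnion] using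
        IsOrderedPartition.merge (M := [C, D]) (by simpa using hr.isOrderedPartition) (by simp)
    have hunion : classUnion (C :: D :: M) = classUnion ((C ∪ D) :: M) := by
      simp [Finset.union_assoc]
    have hmiss {z : α} : (∃ S ∈ C, z ∉ S) → ∃ S ∈ C ∪ D, z ∉ S := fun ⟨S, hS, hz⟩ =>
      ⟨S, Finset.mem_union_left D hS, hz⟩
    have htail := ih hmerged.isClassList_rankRel (hunion ▸ hs) (hmiss hx) (hmiss hy)
    have hhead := hINUI.agreeOn_merge_two hr hmerged.isClassList_rankRel hx hy
    exact fun a ha b hb => (htail a ha b hb).trans (hhead a ha b hb)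

theorem image_swap_of_mem {S : Finset α} (hx : x ∈ S) (hy : y ∈ S) :
    S.image (Equiv.swap x y) = S := by
  have hsupp : {a | Equiv.swap x y a ≠ a} ⊆ S := fun a ha => by
    rcases Equiv.eq_or_eq_of_swap_apply_ne_self ha with rfl | rfl <;> assumption
  simpa [Finset.map_eq_image] using Finset.map_perm hsupp

theorem IsClassList.permRel_swap_eq_self (h : IsClassList s (P ++ [U]))
    (hx : ∀ S ∈ classUnion P, x ∈ S) (hy : ∀ S ∈ classUnion P, y ∈ S) :
    permRel (Equiv.swap x y) s = s := by
  refine h.permRel_eq_self (h.isOrderedPartition.apply_mem_iff_of_fixed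
    (Finset.image_injective (Equiv.injective _)) fun S hS => ?_)
  exact image_swap_of_mem (hx S hS) (hy S hS)

theorem NT.rel_of_permRel_swap_eq_self (hNT : NT R) (hR : IsSRS R) (hs : IsWeakOrder s)
    (hswap : permRel (Equiv.swap x y) s = s) : R s x y := by
  have hiff := hNT (Equiv.swap x y) s hs x y
  rw [hswap, Equiv.swap_apply_left, Equiv.swap_apply_right] at hiff
  exact ((hR s hs).2.1 x y).elim id hiff.1

theorem rel_of_eIIS_eq [Fintype α] (hR : IsSRS R) (hNT : NT R) (hINUI : INUI R)
    (h : IsClassList r L) (heq : eIIS L y = eIIS L x) : R r x y := by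
  have hlt := h.eIIS_lt_length x
  obtain ⟨P, C, M, rfl, hlen⟩ : ∃ P C M, L = P ++ C :: M ∧ eIIS L x = P.length :=
    ⟨L.take (eIIS L x), L[eIIS L x], L.drop (eIIS L x + 1), by simp, by simp [hlt.le]⟩
  obtain ⟨hxP, hxC⟩ := eIIS_append_cons_eq_length_iff.1 hlen
  obtain ⟨hyP, hyC⟩ := eIIS_append_cons_eq_length_iff.1 (heq.trans hlen)
  have hmerged : IsOrderedPartition (P ++ [classUnion (C :: M)]) := by
    simpa using IsOrderedPartition.merge (N := []) (by simpa using h.isOrderedPartition)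
      (List.cons_ne_nil C M)
  have hs := hmerged.isClassList_rankRel
  have hagree := hINUI.agreeOn_merge_tail h hs hxC hyC
  have hrel := hNT.rel_of_permRel_swap_eq_self hR hs.isWeakOrder
    (hs.permRel_swap_eq_self hxP hyP)
  exact (hagree x (by simp) y (by simp)).1 hrel

end Uniqueness

theorem iis_characterization_general (R : (Finset X → Finset X → Prop) → X → X → Prop)
    (hR : IsSRS R) :
    (NT R ∧ WIVIP R ∧ IWS R ∧ IBS R ∧ INUI R) ↔ (∀ r, IsWeakOrder r → R r = RIIS r) := by
  constructor
  · rintro ⟨hNT, hWIVIP, hIWS, hIBS, hINUI⟩ r hr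
    obtain ⟨L, hL⟩ := hr.exists_isClassList
    funext x y
    rw [eq_iff_iff, hL.RIIS_iff]
    rcases lt_trichotomy (eIIS L y) (eIIS L x) with hlt | heq | hgt
    · exact iff_of_true (strictPart_of_eIIS_lt hWIVIP hIWS hIBS hL hlt).1 hlt.le
    · exact iff_of_true (rel_of_eIIS_eq hR hNT hINUI hL heq) heq.le
    · exact iff_of_false (strictPart_of_eIIS_lt hWIVIP hIWS hIBS hL hgt).2 hgt.not_ge
  · intro h
    exact ⟨nt_RIIS.congr h, wivip_RIIS.congr h, iws_RIIS.congr h, ibs_RIIS.congr h,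
      inui_RIIS.congr h⟩

/-- Theorem (characterization of the intersection initial segment rule, `|X| ≥ 3`):
an SRS satisfies NT, WIVIP, IWS, IBS and INUI iff it is `R^IIS`. -/
theorem iis_characterization (hX : 3 ≤ Fintype.card X)
    (R : (Finset X → Finset X → Prop) → X → X → Prop) (hR : IsSRS R) :
    (NT R ∧ WIVIP R ∧ IWS R ∧ IBS R ∧ INUI R) ↔ (∀ r, IsWeakOrder r → R r = RIIS r) :=
  iis_characterization_general R hR

end SocialRanking
end

section
/- For any finite nonempty set X, any ≿ ∈ ℛ(𝔛), and any x, y ∈ X: if x P^IIS_≿ y (x is strictly above y under the intersection initial segment rule), then x P^L_≿ y (x is strictly above y under the lexicographic excellence solution) and x R^P_≿ y (x is weakly above y under plurality). -/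
/-!
Social ranking solutions (SRSs).  The set of individuals is a finite type `X`;
coalitions are elements of `Finset X` (so the domain of a power relation is the
whole power set `𝔛 = 2^X`).  A weak order `≿ ∈ ℛ(𝔛)` is encoded as a relation
`r : Finset X → Finset X → Prop` together with (when needed) its list of
equivalence classes `L = [Σ₁, …, Σ_l]` in strictly decreasing order
(`IsClassList r L`).
-/

namespace SocialRanking

variable {X : Type*} [Fintype X] [DecidableEq X]

/-!
Let `k = e_≿(y) < e_≿(x)`, as a 0-based index. Both individuals belong to every coalition of the
classes before `Σ_k`, so `θ_≿(x)` and `θ_≿(y)` agree there; in `Σ_k` itself `x` is still unanimous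
while `y` is not, so `|Σ_k[y]| < |Σ_k| = |Σ_k[x]|` and `k` is the deciding coordinate. Since `x` is
unanimous in the best class, nobody has a higher plurality score. The rules quantify over all class
lists of `≿`, so the comparison made in one list is transferred by uniqueness of the class list.
-/

namespace IsClassList

omit [Fintype X] [DecidableEq X]

variable {r : Finset X → Finset X → Prop} {L L' : List (Finset (Finset X))}

theorem exists_mem_getElem (hL : IsClassList r L) (S : Finset X) :
    ∃ i, ∃ hi : i < L.length, S ∈ L[i] := by
  obtain ⟨i, ⟨hi, hS⟩, -⟩ := hL.2.1 S
  exact ⟨i, hi, by rwa [List.getD_eq_getElem _ _ hi] at hS⟩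

theorem rel_iff_le (hL : IsClassList r L) {i j : ℕ} (hi : i < L.length) (hj : j < L.length)
    {S T : Finset X} (hS : S ∈ L[i]) (hT : T ∈ L[j]) : r S T ↔ i ≤ j := by
  rw [← List.getD_eq_getElem _ ∅] at hS hT
  exact hL.2.2 i j hi hj S hS T hT

theorem mem_getElem_iff_indiffPart (hL : IsClassList r L) {i : ℕ} (hi : i < L.length)
    {S : Finset X} (hS : S ∈ L[i]) (T : Finset X) : T ∈ L[i] ↔ IndiffPart r S T := by
  obtain ⟨j, hj, hT⟩ := hL.exists_mem_getElem T
  rw [IndiffPart, hL.rel_iff_le hi hj hS hT, hL.rel_iff_le hj hi hT hS, ← le_antisymm_iff]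
  have hTT : r T T := (hL.rel_iff_le hj hj hT hT).2 le_rfl
  constructor
  · intro hTi
    exact le_antisymm ((hL.rel_iff_le hi hj hTi hT).1 hTT) ((hL.rel_iff_le hj hi hT hTi).1 hTT)
  · rintro rfl
    exact hT

theorem mem_iff_exists_indiffPart (hL : IsClassList r L) (C : Finset (Finset X)) :
    C ∈ L ↔ ∃ S, ∀ T, T ∈ C ↔ IndiffPart r S T := by
  constructor
  · intro hC
    obtain ⟨S, hS⟩ := hL.1 C hC
    obtain ⟨i, hi, rfl⟩ := List.mem_iff_getElem.1 hC
    exact ⟨S, hL.mem_getElem_iff_indiffPart hi hS⟩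
  · rintro ⟨S, hC⟩
    obtain ⟨i, hi, hS⟩ := hL.exists_mem_getElem S
    have hCi : C = L[i] := by
      ext T
      rw [hC, hL.mem_getElem_iff_indiffPart hi hS]
    exact hCi ▸ List.getElem_mem hi

theorem pairwise_strictPart (hL : IsClassList r L) :
    L.Pairwise fun C D => ∀ S ∈ C, ∀ T ∈ D, StrictPart r S T := by
  refine List.pairwise_iff_getElem.2 fun i j hi hj hij S hS T hT => ⟨?_, ?_⟩
  · exact (hL.rel_iff_le hi hj hS hT).2 hij.le
  · exact fun hTS => hij.not_ge ((hL.rel_iff_le hj hi hT hS).1 hTS)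

theorem nodup (hL : IsClassList r L) : L.Nodup := by
  refine hL.pairwise_strictPart.imp_of_mem fun {C D} hC _ hCD hEq => ?_
  obtain ⟨S, hS⟩ := hL.1 C hC
  obtain ⟨hSS, hnSS⟩ := hCD S hS S (hEq ▸ hS)
  exact hnSS hSS

theorem unique (hL : IsClassList r L) (hL' : IsClassList r L') : L = L' := by
  have hperm : L.Perm L' := (List.perm_ext_iff_of_nodup hL.nodup hL'.nodup).2 fun C =>
    (hL.mem_iff_exists_indiffPart C).trans (hL'.mem_iff_exists_indiffPart C).symm
  refine List.Perm.eq_of_pairwise (fun C D hC hD hCD hDC => ?_)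
    hL.pairwise_strictPart hL'.pairwise_strictPart hperm
  obtain ⟨S, hS⟩ := hL.1 C hC
  obtain ⟨T, hT⟩ := hL'.1 D hD
  exact absurd (hCD S hS T hT).1 (hDC T hT S hS).2

theorem forall_iff (hL : IsClassList r L) {p : List (Finset (Finset X)) → Prop} :
    (∀ L', IsClassList r L' → p L') ↔ p L :=
  ⟨fun h => h L hL, fun h _ hL' => hL.unique hL' ▸ h⟩

end IsClassList

section Rules

omit [Fintype X]

variable {r : Finset X → Finset X → Prop} {L : List (Finset (Finset X))} {x y : X}

theorem IsClassList.strictPart_rl_iff (hL : IsClassList r L) :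
    StrictPart (RL r) x y ↔ StrictPart GeLex (theta L x) (theta L y) :=
  and_congr hL.forall_iff (not_congr hL.forall_iff)

theorem IsClassList.rp_iff (hL : IsClassList r L) :
    RP r x y ↔ count (L.getD 0 ∅) y ≤ count (L.getD 0 ∅) x :=
  hL.forall_iff

end Rules

theorem strictPart_geLex_of_lt {a b : List ℕ} {k : ℕ} (hk : k < a.length)
    (heq : ∀ j < k, a.getD j 0 = b.getD j 0) (hlt : b.getD k 0 < a.getD k 0) :
    StrictPart GeLex a b := by
  refine ⟨Or.inr ⟨k, hk, heq, hlt⟩, ?_⟩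
  rintro (rfl | ⟨m, -, heq', hlt'⟩)
  · exact hlt.false
  · rcases lt_trichotomy k m with hkm | rfl | hmk
    · exact hlt.ne (heq' k hkm)
    · exact hlt.asymm hlt'
    · exact hlt'.ne (heq m hmk)

section Count

omit [Fintype X]

variable {C : Finset (Finset X)} {x : X}

theorem count_le_card (C : Finset (Finset X)) (x : X) : count C x ≤ C.card :=
  Finset.card_filter_le _ _

theorem count_eq_card_iff : count C x = C.card ↔ ∀ S ∈ C, x ∈ S :=
  Finset.card_filter_eq_iff

theorem count_lt_card_iff : count C x < C.card ↔ ∃ S ∈ C, x ∉ S := by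
  simp only [(count_le_card C x).lt_iff_ne, Ne, count_eq_card_iff, not_forall, exists_prop]

theorem getD_theta (L : List (Finset (Finset X))) (x : X) (k : ℕ) :
    (theta L x).getD k 0 = count (L.getD k ∅) x :=
  List.getD_map L ∅ fun C => count C x

end Count

section InitialSegment

variable {L : List (Finset (Finset X))} {x y : X} {k : ℕ}

theorem eIIS_eq_findIdx (L : List (Finset (Finset X))) (x : X) :
    eIIS L x = L.findIdx fun C => !decide (∀ S ∈ C, x ∈ S) := by
  rw [eIIS, List.takeWhile_eq_take_findIdx_not, List.length_take,
    min_eq_left List.findIdx_le_length]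

theorem eIIS_le_length (L : List (Finset (Finset X))) (x : X) : eIIS L x ≤ L.length :=
  (List.takeWhile_prefix _).length_le

theorem count_getD_eq_card_of_lt_eIIS (hk : k < eIIS L x) :
    count (L.getD k ∅) x = (L.getD k ∅).card := by
  rw [count_eq_card_iff, List.getD_eq_getElem _ _ (hk.trans_le (eIIS_le_length L x))]
  rw [eIIS_eq_findIdx] at hk
  simpa using List.not_of_lt_findIdx hk

theorem count_getD_eIIS_lt_card (h : eIIS L x < L.length) :
    count (L.getD (eIIS L x) ∅) x < (L.getD (eIIS L x) ∅).card := by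
  rw [count_lt_card_iff, List.getD_eq_getElem _ _ h]
  simp only [eIIS_eq_findIdx] at h ⊢
  simpa using List.findIdx_getElem (w := h)

theorem count_getD_le_of_lt_eIIS (hk : k < eIIS L x) (y : X) :
    count (L.getD k ∅) y ≤ count (L.getD k ∅) x :=
  (count_le_card _ y).trans_eq (count_getD_eq_card_of_lt_eIIS hk).symm

theorem strictPart_geLex_theta_of_eIIS_lt (h : eIIS L y < eIIS L x) :
    StrictPart GeLex (theta L x) (theta L y) := by
  have hlen : eIIS L y < L.length := h.trans_le (eIIS_le_length L x)
  refine strictPart_geLex_of_lt (k := eIIS L y) (by rwa [theta, List.length_map]) ?_ ?_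
  · intro j hj
    rw [getD_theta, getD_theta, count_getD_eq_card_of_lt_eIIS hj,
      count_getD_eq_card_of_lt_eIIS (hj.trans h)]
  · rw [getD_theta, getD_theta, count_getD_eq_card_of_lt_eIIS h]
    exact count_getD_eIIS_lt_card hlen

end InitialSegment

/-- If `x P^IIS_≿ y` then `x P^L_≿ y` and `x R^P_≿ y`. -/
theorem iis_strict_implies [Nonempty X] (r : Finset X → Finset X → Prop)
    (hr : IsWeakOrder r) (x y : X) (h : StrictPart (RIIS r) x y) :
    StrictPart (RL r) x y ∧ RP r x y := by
  obtain ⟨L, hL, hlt⟩ : ∃ L, IsClassList r L ∧ eIIS L y < eIIS L x := by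
    simpa [RIIS] using h.2
  exact ⟨hL.strictPart_rl_iff.2 (strictPart_geLex_theta_of_eIIS_lt hlt),
    hL.rp_iff.2 (count_getD_le_of_lt_eIIS (Nat.zero_lt_of_lt hlt) y)⟩

end SocialRanking
end
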